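/- Let X be a real Banach space and g : [0,1] → X. Then g is McShane integrable on [0,1] if and only if the function F_g : [0,1] → ℓ∞(B_{X*}), F_g(t)(x*) = max (x*(g(t))) 0, is McShane integrable on [0,1]. (This is the main theorem: the multifunction G(t) = conv{0, g(t)} determined by g is McShane integrable iff g is McShane integrable, expressed through the isometric Rådström embedding of ck(X) into ℓ∞(B_{X*}), under which McShane integrability of G in the Hausdorff metric is McShane integrability of F_g.) -/

import Mathlib

open MeasureTheory
open scoped ENNReal

/-- The image of the determined multifunction `G(t) = conv{0, g(t)}` under the Rådström
support-function embedding: `Fg g t ∈ ℓ∞(B_{X*})` is given by `x* ↦ max (x* (g t)) 0`. -/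
noncomputable def Fg {X : Type*} [NormedAddCommGroup X] [NormedSpace ℝ X]
    (g : ℝ → X) (t : ℝ) : lp (fun _ : Metric.closedBall (0 : X →L[ℝ] ℝ) 1 => ℝ) ∞ :=
  ⟨fun p => max ((p : X →L[ℝ] ℝ) (g t)) 0, by
    apply memℓp_infty
    refine ⟨‖g t‖, ?_⟩
    rintro r ⟨p, rfl⟩
    have hp : ‖(p : X →L[ℝ] ℝ)‖ ≤ 1 := mem_closedBall_zero_iff.mp p.2
    have h1 : |(p : X →L[ℝ] ℝ) (g t)| ≤ ‖g t‖ := by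
      calc |(p : X →L[ℝ] ℝ) (g t)| = ‖(p : X →L[ℝ] ℝ) (g t)‖ := rfl
        _ ≤ ‖(p : X →L[ℝ] ℝ)‖ * ‖g t‖ := (p : X →L[ℝ] ℝ).le_opNorm _
        _ ≤ 1 * ‖g t‖ := by gcongr
        _ = ‖g t‖ := one_mul _
    simp only [Real.norm_eq_abs]
    rcases le_total ((p : X →L[ℝ] ℝ) (g t)) 0 with h | h
    · rw [max_eq_right h]; simp [norm_nonneg]
    · rw [max_eq_left h, abs_of_nonneg h]
      exact (le_abs_self _).trans h1⟩

/-- The unit interval `[0,1]` as a one-dimensional box. -/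
noncomputable def unitBox : BoxIntegral.Box (Fin 1) :=
  ⟨fun _ => (0 : ℝ), fun _ => (1 : ℝ), fun _ => one_pos⟩

namespace BoxIntegral

variable {ι : Type*} {E F : Type*} [NormedAddCommGroup E] [NormedSpace ℝ E]
  [NormedAddCommGroup F] [NormedSpace ℝ F] {I : Box ι}

open scoped Classical in
/-- Two tagged partitions have a common refinement on which the tag of each box may be chosen
from either of the two, according to a predicate `p`. -/
noncomputable def TaggedPrepartition.mixTags (π₁ π₂ : TaggedPrepartition I) (p : Box ι → Prop) :
    TaggedPrepartition I where
  toPrepartition := π₁.toPrepartition ⊓ π₂.toPrepartition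
  tag J := if p J then (π₁.infPrepartition π₂.toPrepartition).tag J
    else (π₂.infPrepartition π₁.toPrepartition).tag J
  tag_mem_Icc J := by
    split_ifs
    exacts [TaggedPrepartition.tag_mem_Icc _ J, TaggedPrepartition.tag_mem_Icc _ J]

theorem TaggedPrepartition.IsPartition.mixTags {π₁ π₂ : TaggedPrepartition I}
    (h₁ : π₁.IsPartition) (h₂ : π₂.IsPartition) (p : Box ι → Prop) :
    (π₁.mixTags π₂ p).IsPartition :=
  Prepartition.IsPartition.inf h₁ h₂

open scoped Classical in
theorem integralSum_mixTags_sub (f : (ι → ℝ) → E) (vol : ι →ᵇᵃ (E →L[ℝ] F))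
    {π₁ π₂ : TaggedPrepartition I} (h₁ : π₁.IsPartition) (p : Box ι → Prop) :
    integralSum f vol (π₁.mixTags π₂ p) - integralSum f vol π₂ =
      ∑ J ∈ (π₁.toPrepartition ⊓ π₂.toPrepartition).boxes,
        if p J then vol J (f <| (π₁.infPrepartition π₂.toPrepartition).tag J) -
          vol J (f <| (π₂.infPrepartition π₁.toPrepartition).tag J) else 0 := by
  rw [← integralSum_inf_partition f vol π₂ h₁, integralSum, integralSum,
    TaggedPrepartition.infPrepartition_toPrepartition, inf_comm π₂.toPrepartition]
  change ∑ J ∈ (π₁.toPrepartition ⊓ π₂.toPrepartition).boxes, _ - _ = _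
  rw [← Finset.sum_sub_distrib]
  refine Finset.sum_congr rfl fun J _ => ?_
  by_cases hp : p J <;> simp [TaggedPrepartition.mixTags, hp]

variable [Fintype ι]

theorem TaggedPrepartition.IsSubordinate.mixTags {π₁ π₂ : TaggedPrepartition I}
    {r : (ι → ℝ) → Set.Ioi (0 : ℝ)} (h₁ : π₁.IsSubordinate r) (h₂ : π₂.IsSubordinate r)
    (p : Box ι → Prop) : (π₁.mixTags π₂ p).IsSubordinate r := by
  intro J hJ
  by_cases hp : p J
  · simpa [TaggedPrepartition.mixTags, hp] using h₁.infPrepartition π₂.toPrepartition J hJ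
  · have hJ' : J ∈ π₂.infPrepartition π₁.toPrepartition :=
      TaggedPrepartition.mem_infPrepartition_comm.1 hJ
    simpa [TaggedPrepartition.mixTags, hp] using h₂.infPrepartition π₁.toPrepartition J hJ'

theorem memBaseSet_mcShane_iff {c : NNReal} {r : (ι → ℝ) → Set.Ioi (0 : ℝ)}
    {π : TaggedPrepartition I} :
    IntegrationParams.McShane.MemBaseSet I c r π ↔ π.IsSubordinate r :=
  ⟨fun h => h.isSubordinate, fun h => ⟨h, (nomatch ·), (nomatch ·), (nomatch ·)⟩⟩

/-- The Cauchy criterion for the McShane integral, with a single gauge. -/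
theorem integrable_mcShane_iff_cauchy [CompleteSpace F] {f : (ι → ℝ) → E}
    {vol : ι →ᵇᵃ (E →L[ℝ] F)} :
    Integrable I IntegrationParams.McShane f vol ↔
      ∀ ε > (0 : ℝ), ∃ r : (ι → ℝ) → Set.Ioi (0 : ℝ), ∀ π₁ π₂ : TaggedPrepartition I,
        π₁.IsSubordinate r → π₁.IsPartition → π₂.IsSubordinate r → π₂.IsPartition →
        ‖integralSum f vol π₁ - integralSum f vol π₂‖ ≤ ε := by
  rw [integrable_iff_cauchy_basis]
  simp only [memBaseSet_mcShane_iff, dist_eq_norm]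
  refine forall₂_congr fun ε _ => ⟨fun ⟨r, _, h⟩ => ⟨r 0, h 0 0⟩, fun ⟨r, h⟩ => ?_⟩
  exact ⟨fun _ => r, fun _ => IntegrationParams.rCond_of_bRiemann_eq_false _ rfl,
    fun _ _ => h⟩

end BoxIntegral

open BoxIntegral

section Fg

variable {X : Type*} [NormedAddCommGroup X] [NormedSpace ℝ X]

theorem Fg_apply (g : ℝ → X) (t : ℝ) (p : Metric.closedBall (0 : X →L[ℝ] ℝ) 1) :
    Fg g t p = max ((p : X →L[ℝ] ℝ) (g t)) 0 := rfl

variable {ι : Type*} {I : Box ι} [Fintype ι]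

theorem integralSum_Fg_apply (g : ℝ → X) (i : ι) (π : TaggedPrepartition I)
    (p : Metric.closedBall (0 : X →L[ℝ] ℝ) 1) :
    integralSum (fun v => Fg g (v i)) volume.toBoxAdditive.toSMul π p =
      integralSum (fun v => max ((p : X →L[ℝ] ℝ) (g (v i))) 0)
        volume.toBoxAdditive.toSMul π := by
  simp only [integralSum, BoxAdditiveMap.toSMul_apply, lp.coeFn_sum, Finset.sum_apply,
    lp.coeFn_smul, Pi.smul_apply, Fg_apply]

theorem map_integralSum_volume {E F : Type*} [NormedAddCommGroup E] [NormedSpace ℝ E]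
    [NormedAddCommGroup F] [NormedSpace ℝ F] (L : E →L[ℝ] F) (f : (ι → ℝ) → E)
    (π : TaggedPrepartition I) :
    L (integralSum f volume.toBoxAdditive.toSMul π) =
      integralSum (fun v => L (f v)) volume.toBoxAdditive.toSMul π := by
  simp only [integralSum, BoxAdditiveMap.toSMul_apply, map_sum, map_smul]

/-- The integral sums of `g` are controlled by those of `Fg g`, because
`x* (g t) = Fg g t x* - Fg g t (-x*)`. -/
theorem norm_integralSum_sub_le_Fg (g : ℝ → X) (i : ι) (π₁ π₂ : TaggedPrepartition I) :
    ‖integralSum (fun v => g (v i)) volume.toBoxAdditive.toSMul π₁ -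
        integralSum (fun v => g (v i)) volume.toBoxAdditive.toSMul π₂‖ ≤
      2 * ‖integralSum (fun v => Fg g (v i)) volume.toBoxAdditive.toSMul π₁ -
        integralSum (fun v => Fg g (v i)) volume.toBoxAdditive.toSMul π₂‖ := by
  set D := integralSum (fun v => Fg g (v i)) volume.toBoxAdditive.toSMul π₁ -
    integralSum (fun v => Fg g (v i)) volume.toBoxAdditive.toSMul π₂ with hD
  obtain ⟨x, hx, hxd⟩ := exists_dual_vector'' ℝ
    (integralSum (fun v => g (v i)) volume.toBoxAdditive.toSMul π₁ -
      integralSum (fun v => g (v i)) volume.toBoxAdditive.toSMul π₂)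
  have hsplit (π : TaggedPrepartition I) :
      x (integralSum (fun v => g (v i)) volume.toBoxAdditive.toSMul π) =
      integralSum (fun v => Fg g (v i)) volume.toBoxAdditive.toSMul π
        ⟨x, mem_closedBall_zero_iff.2 hx⟩ -
      integralSum (fun v => Fg g (v i)) volume.toBoxAdditive.toSMul π
        ⟨-x, mem_closedBall_zero_iff.2 ((norm_neg x).trans_le hx)⟩ := by
    rw [integralSum_Fg_apply, integralSum_Fg_apply, map_integralSum_volume, integralSum,
      integralSum, integralSum, ← Finset.sum_sub_distrib]
    refine Finset.sum_congr rfl fun J _ => ?_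
    rw [← map_sub]
    exact congrArg _ (max_zero_sub_max_neg_zero_eq_self _).symm
  have h₁ := (le_abs_self _).trans
    (lp.norm_apply_le_norm ENNReal.top_ne_zero D ⟨x, mem_closedBall_zero_iff.2 hx⟩)
  have h₂ := (neg_le_abs _).trans (lp.norm_apply_le_norm ENNReal.top_ne_zero D
    ⟨-x, mem_closedBall_zero_iff.2 ((norm_neg x).trans_le hx)⟩)
  simp only [hD, lp.coeFn_sub, Pi.sub_apply] at h₁ h₂
  rw [← hD] at h₁ h₂
  rw [map_sub, hsplit, hsplit] at hxd
  simp only [RCLike.ofReal_real_eq_id, id_eq] at hxd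
  linarith

theorem integralSum_Fg_sub_apply_le (g : ℝ → X) (i : ι) {r : (ι → ℝ) → Set.Ioi (0 : ℝ)} {ε : ℝ}
    (h : ∀ π₁ π₂ : TaggedPrepartition I,
      π₁.IsSubordinate r → π₁.IsPartition → π₂.IsSubordinate r → π₂.IsPartition →
      ‖integralSum (fun v => g (v i)) volume.toBoxAdditive.toSMul π₁ -
        integralSum (fun v => g (v i)) volume.toBoxAdditive.toSMul π₂‖ ≤ ε)
    {π₁ π₂ : TaggedPrepartition I} (hs₁ : π₁.IsSubordinate r) (hp₁ : π₁.IsPartition)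
    (hs₂ : π₂.IsSubordinate r) (hp₂ : π₂.IsPartition)
    (x : Metric.closedBall (0 : X →L[ℝ] ℝ) 1) :
    integralSum (fun v => Fg g (v i)) volume.toBoxAdditive.toSMul π₁ x -
      integralSum (fun v => Fg g (v i)) volume.toBoxAdditive.toSMul π₂ x ≤ ε := by
  classical
  set s₁ := (π₁.infPrepartition π₂.toPrepartition).tag
  set s₂ := (π₂.infPrepartition π₁.toPrepartition).tag
  let p : Box ι → Prop := fun J => x.1 (g (s₂ J i)) ≤ x.1 (g (s₁ J i))
  set D := integralSum (fun v => g (v i)) volume.toBoxAdditive.toSMul (π₁.mixTags π₂ p) -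
    integralSum (fun v => g (v i)) volume.toBoxAdditive.toSMul π₂ with hD
  calc
    _ ≤ x.1 D := by
      rw [hD, map_sub, map_integralSum_volume, map_integralSum_volume,
        integralSum_mixTags_sub _ _ hp₁, integralSum_Fg_apply, integralSum_Fg_apply,
        integralSum_sub_partitions _ _ hp₁ hp₂]
      refine Finset.sum_le_sum fun J _ => ?_
      simp only [BoxAdditiveMap.toSMul_apply, smul_eq_mul, ← mul_sub]
      have hJ : 0 ≤ volume.toBoxAdditive J := ENNReal.toReal_nonneg
      split_ifs with hpJ
      · refine mul_le_mul_of_nonneg_left ?_ hJ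
        have hpJ' : x.1 (g (s₂ J i)) ≤ x.1 (g (s₁ J i)) := hpJ
        grind
      · refine mul_nonpos_of_nonneg_of_nonpos hJ (sub_nonpos.2 (max_le_max_right 0 ?_))
        exact (not_le.1 hpJ).le
    _ ≤ ‖x.1 D‖ := le_abs_self _
    _ ≤ ‖D‖ := by
      simpa using x.1.le_of_opNorm_le (mem_closedBall_zero_iff.1 x.2) D
    _ ≤ ε := h _ _ (hs₁.mixTags hs₂ p) (hp₁.mixTags hp₂ p) hs₂ hp₂

end Fg

/-- Main theorem: the multifunction `G(t) = conv{0, g(t)}` determined by `g` (expressed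
through the isometric Rådström embedding as `F_g : [0,1] → ℓ∞(B_{X*})`) is McShane
integrable on `[0,1]` if and only if `g` is McShane integrable on `[0,1]`. -/
theorem mcShane_integrable_Fg_iff {X : Type*} [NormedAddCommGroup X] [NormedSpace ℝ X]
    [CompleteSpace X] (g : ℝ → X) :
    (∃ y : X, BoxIntegral.HasIntegral unitBox BoxIntegral.IntegrationParams.McShane
        (fun v => g (v 0)) MeasureTheory.volume.toBoxAdditive.toSMul y) ↔
      (∃ Y, BoxIntegral.HasIntegral unitBox BoxIntegral.IntegrationParams.McShane
        (fun v => Fg g (v 0)) MeasureTheory.volume.toBoxAdditive.toSMul Y) := by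
  refine ⟨fun h => integrable_mcShane_iff_cauchy.2 fun ε hε => ?_,
    fun h => integrable_mcShane_iff_cauchy.2 fun ε hε => ?_⟩
  · obtain ⟨r, hr⟩ := integrable_mcShane_iff_cauchy.1 h ε hε
    refine ⟨r, fun π₁ π₂ hs₁ hp₁ hs₂ hp₂ => lp.norm_le_of_forall_le hε.le fun x => ?_⟩
    rw [lp.coeFn_sub, Pi.sub_apply, Real.norm_eq_abs, abs_sub_le_iff]
    exact ⟨integralSum_Fg_sub_apply_le g 0 hr hs₁ hp₁ hs₂ hp₂ x,
      integralSum_Fg_sub_apply_le g 0 hr hs₂ hp₂ hs₁ hp₁ x⟩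
  · obtain ⟨r, hr⟩ := integrable_mcShane_iff_cauchy.1 h (ε / 2) (half_pos hε)
    refine ⟨r, fun π₁ π₂ hs₁ hp₁ hs₂ hp₂ => (norm_integralSum_sub_le_Fg g 0 π₁ π₂).trans ?_⟩
    linarith [hr π₁ π₂ hs₁ hp₁ hs₂ hp₂]
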